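/- Every idempotent magma M satisfying the generalized entropic property satisfies the identities (x*y)*(u*v) = ((x*y)*(u*y)) * ((x*v)*(u*v)) and (x*y)*(u*v) = ((x*y)*(x*v)) * ((u*y)*(u*v)) for all x,y,u,v in M. -/

import Mathlib

/-- Evaluation of a binary term (an element of the free magma on two
generators) in a magma `M` under the assignment `0 ↦ a`, `1 ↦ b`. -/
def evalBin {M : Type*} [Mul M] (t : FreeMagma (Fin 2)) (a b : M) : M :=
  FreeMagma.lift ![a, b] t

/-- A magma satisfies the generalized entropic property if there are binary
terms `t`, `s` with `(x*y)*(u*v) = t(x,u)*s(y,v)`. -/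
def GEP (M : Type*) [Mul M] : Prop :=
  ∃ t s : FreeMagma (Fin 2),
    ∀ x y u v : M, (x * y) * (u * v) = evalBin t x u * evalBin s y v

/-!
Terms in an idempotent magma are idempotent operations. Setting `x = u` or `y = v` in the entropic
identity therefore gives `(x * y) * (x * v) = x * s(y, v)` and `(x * y) * (u * y) = t(x, u) * y`.
Starting from `(x * y) * (u * v) = t(x, u) * s(y, v)`, eliminating `s` before `t` yields the first
identity, and eliminating `t` before `s` the second.
-/

theorem freeMagma_lift_const {α M : Type*} [Mul M] {a : M} (ha : IsIdempotentElem a)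
    (t : FreeMagma α) : FreeMagma.lift (fun _ ↦ a) t = a := by
  induction t using FreeMagma.recOnMul with
  | ih1 i => exact FreeMagma.lift_of _ i
  | ih2 p q hp hq => rw [map_mul, hp, hq, ha.eq]

theorem evalBin_self {M : Type*} [Mul M] {a : M} (ha : IsIdempotentElem a)
    (t : FreeMagma (Fin 2)) : evalBin t a a = a := by
  have const_assignment : ![a, a] = fun _ ↦ a := by
    rw [Matrix.vec_single_eq_const, Matrix.vecCons_const]
  rw [evalBin, const_assignment, freeMagma_lift_const ha]

/-- The generalized entropic identity for the pair `f`, `g`, which may be arbitrary binary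
operations rather than the operations induced by terms. -/
def EntropicPair {M : Type*} [Mul M] (f g : M → M → M) : Prop :=
  ∀ x y u v : M, (x * y) * (u * v) = f x u * g y v

namespace EntropicPair

variable {M : Type*} [Mul M] {f g : M → M → M}

theorem mul_mul_mul_same_left (h : EntropicPair f g) (hf : ∀ x, f x x = x) (x y v : M) :
    (x * y) * (x * v) = x * g y v := by
  rw [h, hf]

theorem mul_mul_mul_same_right (h : EntropicPair f g) (hg : ∀ y, g y y = y) (x u y : M) :
    (x * y) * (u * y) = f x u * y := by
  rw [h, hg]

theorem pseudo_distrib_right (h : EntropicPair f g) (hf : ∀ x, f x x = x)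
    (hg : ∀ y, g y y = y) (x y u v : M) :
    (x * y) * (u * v) = ((x * y) * (u * y)) * ((x * v) * (u * v)) :=
  calc
    (x * y) * (u * v) = f x u * g y v := h x y u v
    _ = (f x u * y) * (f x u * v) := (h.mul_mul_mul_same_left hf (f x u) y v).symm
    _ = ((x * y) * (u * y)) * ((x * v) * (u * v)) := by
      simp only [h.mul_mul_mul_same_right hg]

theorem pseudo_distrib_left (h : EntropicPair f g) (hf : ∀ x, f x x = x)
    (hg : ∀ y, g y y = y) (x y u v : M) :
    (x * y) * (u * v) = ((x * y) * (x * v)) * ((u * y) * (u * v)) :=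
  calc
    (x * y) * (u * v) = f x u * g y v := h x y u v
    _ = (x * g y v) * (u * g y v) := (h.mul_mul_mul_same_right hg x u (g y v)).symm
    _ = ((x * y) * (x * v)) * ((u * y) * (u * v)) := by
      simp only [h.mul_mul_mul_same_left hf]

end EntropicPair

/-- Every idempotent magma with the generalized entropic property satisfies
the two pseudo-distributivity identities. -/
theorem stmt_11 {M : Type*} [Mul M]
    (hidem : ∀ x : M, x * x = x)
    (hGEP : GEP M) :
    ∀ x y u v : M,
      (x * y) * (u * v) = ((x * y) * (u * y)) * ((x * v) * (u * v)) ∧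
      (x * y) * (u * v) = ((x * y) * (x * v)) * ((u * y) * (u * v)) := by
  obtain ⟨t, s, h⟩ := hGEP
  have entropic : EntropicPair (evalBin (M := M) t) (evalBin s) := h
  have t_idem (x : M) : evalBin t x x = x := evalBin_self (hidem x) t
  have s_idem (y : M) : evalBin s y y = y := evalBin_self (hidem y) s
  exact fun x y u v ↦
    ⟨entropic.pseudo_distrib_right t_idem s_idem x y u v,
      entropic.pseudo_distrib_left t_idem s_idem x y u v⟩
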